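/- arXiv:1601.04856 — 2 statements merged into one kernel-verified Lean document; each statement's English description precedes it below -/
import Mathlib

section
/- If H is a 3-uniform hypergraph with maximum degree Δ(H) ≤ 2, then τ_g(H) ≤ (3/10)(n(H) + m(H)). -/
variable {V : Type} [Fintype V] [DecidableEq V]

/-- The set of legal moves in the transversal game with uncovered edge set `E`:
the vertices hitting at least one uncovered edge. -/
def playable (E : Finset (Finset V)) : Finset V :=
  Finset.univ.filter (fun v => ∃ e ∈ E, v ∈ e)

/-- The number of moves remaining in the transversal game with uncovered edge set `E`
under optimal play, where `ehTurn = true` iff Edge-hitter (the minimizer) moves next;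
Staller (the maximizer) moves next iff `ehTurn = false`.  Each move must hit at least
one uncovered edge, and the game ends when no uncovered edge remains. -/
def gameVal (ehTurn : Bool) (E : Finset (Finset V)) : ℕ :=
  if h : (playable E).Nonempty then
    1 +
      (if ehTurn then
        (playable E).attach.inf' (Finset.attach_nonempty_iff.mpr h)
          (fun v => gameVal (!ehTurn) (E.filter (fun e => v.1 ∉ e)))
      else
        (playable E).attach.sup' (Finset.attach_nonempty_iff.mpr h)
          (fun v => gameVal (!ehTurn) (E.filter (fun e => v.1 ∉ e))))
  else 0
termination_by E.card
decreasing_by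
  all_goals
    obtain ⟨v, hv⟩ := v
    simp only [playable, Finset.mem_filter, Finset.mem_univ, true_and] at hv
    obtain ⟨e, he, hve⟩ := hv
    exact Finset.card_lt_card (Finset.filter_ssubset.mpr ⟨e, he, by simp [hve]⟩)

/-- The game transversal number `τ_g`: Edge-hitter makes the first move. -/
def gameTransversalNum (E : Finset (Finset V)) : ℕ := gameVal true E

/-- The Staller-start game transversal number `τ_g'`: Staller makes the first move. -/
def stallerGameTransversalNum (E : Finset (Finset V)) : ℕ := gameVal false E

/-- The transversal number `τ`: the minimum size of a set of vertices meeting all edges. -/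
noncomputable def transversalNum (E : Finset (Finset V)) : ℕ :=
  sInf {n | ∃ T : Finset V, (∀ e ∈ E, ∃ v ∈ T, v ∈ e) ∧ T.card = n}

/-!
Let `q` be the number of vertices of degree two of a hypergraph with `m` edges, all of size at
most three, and let `Φ = 6m - q`. By simultaneous induction, with optimal play the game lasts at
most `Φ / 6` moves if Edge-hitter starts and at most `(Φ + 2) / 6` if Staller starts: every move
lowers `Φ` by at least `4`, and if some edge contains one or two vertices of degree two, then
Edge-hitter can lower `Φ` by at least `8` by playing one of these. If there is no such edge but
there are vertices of degree two, Edge-hitter is only guaranteed a drop of `7`, but double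
counting gives `3 ∣ 2q`, so `3 ∣ Φ`, and divisibility makes up for the missing unit. If `q = 0`,
the bound says that there are at most `m` moves.

For a `3`-uniform hypergraph of maximum degree at most two, counting incidences gives
`2q ≤ 3m ≤ n + q`, and a linear combination of these with `6 τ_g ≤ 6m - q` is the claim.
-/

namespace TransversalGame

open Finset

section Hypergraph

variable {α : Type*} [DecidableEq α]

/-- The degree of the vertex `v` in the hypergraph with edge set `E`. -/
def degree (E : Finset (Finset α)) (v : α) : ℕ := #{e ∈ E | v ∈ e}

/-- The residual hypergraph after the move `v`, given by the edges not yet hit; the vertex set is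
left unchanged. -/
def residual (E : Finset (Finset α)) (v : α) : Finset (Finset α) := {e ∈ E | v ∉ e}

/-- The closed neighbourhood of `v`: the union of the edges at `v`. It is empty, rather than `{v}`,
if `v` lies on no edge. -/
def closedNbhd (E : Finset (Finset α)) (v : α) : Finset α := {e ∈ E | v ∈ e}.biUnion id

/-- The set of vertices of degree two. -/
def degTwo [Fintype α] (E : Finset (Finset α)) : Finset α := {v | degree E v = 2}

/-- The potential `6m - q` controlling the game, where `m` is the number of edges and `q` the
number of vertices of degree two; integer-valued to avoid truncated subtraction. -/
def potential [Fintype α] (E : Finset (Finset α)) : ℤ := 6 * #E - #(degTwo E)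

lemma degree_add_card_residual (E : Finset (Finset α)) (v : α) :
    degree E v + #(residual E v) = #E :=
  card_filter_add_card_filter_not _

lemma degree_pos_iff {E : Finset (Finset α)} {v : α} : 0 < degree E v ↔ ∃ e ∈ E, v ∈ e := by
  simp only [degree, card_pos, filter_nonempty_iff]

lemma degree_residual_of_notMem_closedNbhd {E : Finset (Finset α)} {v w : α}
    (hw : w ∉ closedNbhd E v) : degree (residual E v) w = degree E w := by
  simp only [closedNbhd, mem_biUnion, mem_filter, id, not_exists, not_and, and_imp] at hw
  rw [degree, degree, residual, filter_filter]
  congr 1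
  exact filter_congr fun e he => ⟨And.right, fun hwe => ⟨fun hve => hw e he hve hwe, hwe⟩⟩

lemma card_inter_closedNbhd_le {E : Finset (Finset α)} {r : ℕ} (hE : ∀ e ∈ E, #e ≤ r + 1)
    {e : Finset α} {v : α} (he : e ∈ E) (hv : v ∈ e) (Q : Finset α) :
    #(Q ∩ closedNbhd E v) ≤ #(Q ∩ e) + (degree E v - 1) * r := by
  set others : Finset (Finset α) := {f ∈ E | v ∈ f}.erase e
  have hothers : #others = degree E v - 1 := card_erase_of_mem (mem_filter.mpr ⟨he, hv⟩)
  have hsub : Q ∩ closedNbhd E v ⊆ Q ∩ e ∪ others.biUnion (·.erase v) := by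
    intro w hw
    simp only [others, closedNbhd, mem_inter, mem_biUnion, mem_filter, id, mem_union,
      mem_erase] at hw ⊢
    obtain ⟨hwQ, f, ⟨hf, hvf⟩, hwf⟩ := hw
    by_cases hwe : w ∈ e
    · exact .inl ⟨hwQ, hwe⟩
    · exact .inr ⟨f, ⟨by grind, hf, hvf⟩, by grind, hwf⟩
  have hcard : #(others.biUnion (·.erase v)) ≤ #others * r := by
    refine card_biUnion_le_card_mul _ _ _ fun f hf => ?_
    obtain ⟨hfE, hvf⟩ := mem_filter.mp (mem_of_mem_erase hf)
    rw [card_erase_of_mem hvf]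
    exact Nat.sub_le_of_le_add (hE f hfE)
  calc #(Q ∩ closedNbhd E v) ≤ #(Q ∩ e ∪ others.biUnion (·.erase v)) := card_le_card hsub
    _ ≤ #(Q ∩ e) + #(others.biUnion (·.erase v)) := card_union_le _ _
    _ ≤ #(Q ∩ e) + (degree E v - 1) * r := by grw [hcard, hothers]

variable [Fintype α]

lemma mem_degTwo {E : Finset (Finset α)} {v : α} : v ∈ degTwo E ↔ degree E v = 2 := by
  simp only [degTwo, mem_filter_univ]

lemma sum_card_degTwo_inter (E : Finset (Finset α)) :
    ∑ e ∈ E, #(degTwo E ∩ e) = #(degTwo E) * 2 :=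
  sum_card_inter fun _ => mem_degTwo.mp

lemma card_degTwo_mul_two_le_sum_card (E : Finset (Finset α)) :
    #(degTwo E) * 2 ≤ ∑ e ∈ E, #e := by
  rw [← sum_card_degTwo_inter]
  exact sum_le_sum fun e _ => card_le_card inter_subset_right

lemma sum_card_le_card_add_card_degTwo {E : Finset (Finset α)} (hΔ : ∀ v, degree E v ≤ 2) :
    ∑ e ∈ E, #e ≤ Fintype.card α + #(degTwo E) := by
  have hrest : ∑ e ∈ E, #((degTwo E)ᶜ ∩ e) ≤ #(degTwo E)ᶜ * 1 := by
    refine sum_card_inter_le fun v hv => ?_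
    have hne : degree E v ≠ 2 := fun h => mem_compl.mp hv (mem_degTwo.mpr h)
    exact Nat.le_of_lt_succ ((hΔ v).lt_of_ne hne)
  have hsplit (e : Finset α) : #e = #(degTwo E ∩ e) + #((degTwo E)ᶜ ∩ e) := by
    rw [inter_comm, inter_comm (degTwo E)ᶜ, ← sdiff_eq_inter_compl, card_inter_add_card_sdiff]
  calc ∑ e ∈ E, #e = ∑ e ∈ E, #(degTwo E ∩ e) + ∑ e ∈ E, #((degTwo E)ᶜ ∩ e) := by
        rw [← sum_add_distrib]
        exact sum_congr rfl fun e _ => hsplit e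
    _ ≤ #(degTwo E) * 2 + #(degTwo E)ᶜ * 1 := by grw [sum_card_degTwo_inter, hrest]
    _ = Fintype.card α + #(degTwo E) := by
        rw [← card_add_card_compl (degTwo E)]
        ring

lemma card_degTwo_le_card_degTwo_residual_add (E : Finset (Finset α)) (v : α) :
    #(degTwo E) ≤ #(degTwo (residual E v)) + #(degTwo E ∩ closedNbhd E v) := by
  have hsub : degTwo E \ closedNbhd E v ⊆ degTwo (residual E v) := by
    intro w hw
    obtain ⟨hw2, hwN⟩ := mem_sdiff.mp hw
    rw [mem_degTwo, degree_residual_of_notMem_closedNbhd hwN]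
    exact mem_degTwo.mp hw2
  rw [← card_sdiff_add_card_inter (degTwo E) (closedNbhd E v)]
  grw [hsub]

lemma potential_residual_add_le (E : Finset (Finset α)) (v : α) :
    potential (residual E v) + 6 * degree E v ≤
      potential E + #(degTwo E ∩ closedNbhd E v) := by
  have hm := degree_add_card_residual E v
  have hq := card_degTwo_le_card_degTwo_residual_add E v
  unfold potential
  lia

lemma potential_nonneg {E : Finset (Finset α)} (hE : ∀ e ∈ E, #e ≤ 3) : 0 ≤ potential E := by
  have hq := card_degTwo_mul_two_le_sum_card E
  have hsum : ∑ e ∈ E, #e ≤ #E * 3 := sum_le_card_nsmul E _ 3 hE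
  unfold potential
  lia

lemma potential_residual_add_four_le {E : Finset (Finset α)} (hE : ∀ e ∈ E, #e ≤ 3) {v : α}
    (hv : 0 < degree E v) : potential (residual E v) + 4 ≤ potential E := by
  obtain ⟨e, he, hve⟩ := degree_pos_iff.mp hv
  have hdrop := potential_residual_add_le E v
  have hN := card_inter_closedNbhd_le hE he hve (degTwo E)
  by_cases hv2 : degree E v = 2
  · have hQe : #(degTwo E ∩ e) ≤ 3 := (card_le_card inter_subset_right).trans (hE e he)
    lia
  · have hQe : #(degTwo E ∩ e) < #e := by
      refine card_lt_card (inter_subset_right.ssubset_of_ne fun h => hv2 ?_)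
      exact mem_degTwo.mp (inter_eq_right.mp h hve)
    have := hE e he
    lia

lemma potential_residual_add_ten_le {E : Finset (Finset α)} (hE : ∀ e ∈ E, #e ≤ 3)
    {e : Finset α} {v : α} (he : e ∈ E) (hve : v ∈ e) (hv : v ∈ degTwo E) :
    potential (residual E v) + 10 ≤ potential E + #(degTwo E ∩ e) := by
  have hdrop := potential_residual_add_le E v
  have hN := card_inter_closedNbhd_le hE he hve (degTwo E)
  rw [mem_degTwo.mp hv] at hdrop hN
  lia

lemma three_dvd_potential {E : Finset (Finset α)}
    (hE : ∀ e ∈ E, 3 ∣ #(degTwo E ∩ e)) : 3 ∣ potential E := by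
  have hsum : 3 ∣ #(degTwo E) * 2 := sum_card_degTwo_inter E ▸ dvd_sum hE
  unfold potential
  lia

end Hypergraph

lemma mem_playable {E : Finset (Finset V)} {v : V} : v ∈ playable E ↔ 0 < degree E v := by
  rw [degree_pos_iff, playable, mem_filter_univ]

lemma residual_ssubset {E : Finset (Finset V)} {v : V} (hv : v ∈ playable E) :
    residual E v ⊂ E := by
  obtain ⟨e, he, hve⟩ := degree_pos_iff.mp (mem_playable.mp hv)
  exact filter_ssubset.mpr ⟨e, he, not_not_intro hve⟩

lemma gameVal_true_le {E : Finset (Finset V)} {v : V} (hv : v ∈ playable E) :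
    gameVal true E ≤ 1 + gameVal false (residual E v) := by
  rw [gameVal, dif_pos ⟨v, hv⟩, if_pos rfl]
  exact Nat.add_le_add_left (inf'_le _ (mem_attach _ ⟨v, hv⟩)) 1

lemma gameVal_eq_zero_or_exists (ehTurn : Bool) (E : Finset (Finset V)) :
    gameVal ehTurn E = 0 ∨
      ∃ v ∈ playable E, gameVal ehTurn E = 1 + gameVal (!ehTurn) (residual E v) := by
  by_cases h : (playable E).Nonempty
  · right
    have hattach := attach_nonempty_iff.mpr h
    let value : playable E → ℕ := fun v => gameVal (!ehTurn) (residual E v)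
    rw [gameVal, dif_pos h]
    cases ehTurn with
    | true =>
      obtain ⟨v, -, hv⟩ := exists_mem_eq_inf' hattach value
      exact ⟨v, v.2, congrArg (1 + ·) hv⟩
    | false =>
      obtain ⟨v, -, hv⟩ := exists_mem_eq_sup' hattach value
      exact ⟨v, v.2, congrArg (1 + ·) hv⟩
  · left
    rw [gameVal, dif_neg h]

lemma gameVal_le_card (ehTurn : Bool) (E : Finset (Finset V)) : gameVal ehTurn E ≤ #E := by
  induction E using Finset.strongInduction generalizing ehTurn with
  | H E ih =>
    rcases gameVal_eq_zero_or_exists ehTurn E with h | ⟨v, hv, h⟩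
    · exact h ▸ Nat.zero_le _
    · have hle := ih _ (residual_ssubset hv) (!ehTurn)
      have hlt := card_lt_card (residual_ssubset hv)
      lia

lemma six_mul_gameVal_false_le_of_residual {E : Finset (Finset V)} (hE : ∀ e ∈ E, #e ≤ 3)
    (ih : ∀ v ∈ playable E, 6 * (gameVal true (residual E v) : ℤ) ≤ potential (residual E v)) :
    6 * (gameVal false E : ℤ) ≤ potential E + 2 := by
  rcases gameVal_eq_zero_or_exists false E with h | ⟨v, hv, h⟩
  · have := potential_nonneg hE
    lia
  · have hdrop := potential_residual_add_four_le hE (mem_playable.mp hv)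
    have hrest := ih v hv
    rw [h, Bool.not_false]
    lia

lemma six_mul_gameVal_true_le_of_residual {E : Finset (Finset V)} (hE : ∀ e ∈ E, #e ≤ 3)
    (ih : ∀ v ∈ playable E,
      6 * (gameVal false (residual E v) : ℤ) ≤ potential (residual E v) + 2) :
    6 * (gameVal true E : ℤ) ≤ potential E := by
  have hplay {e : Finset V} (he : e ∈ E) {v : V} (hv : v ∈ degTwo E ∩ e) :
      6 * (gameVal true E : ℤ) ≤ potential E + #(degTwo E ∩ e) - 2 := by
    obtain ⟨hv2, hve⟩ := mem_inter.mp hv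
    have hvE : v ∈ playable E := mem_playable.mpr (degree_pos_iff.mpr ⟨e, he, hve⟩)
    have hdrop := potential_residual_add_ten_le hE he hve hv2
    have hmove := gameVal_true_le hvE
    have hrest := ih v hvE
    lia
  rcases (degTwo E).eq_empty_or_nonempty with hQ | ⟨v, hv⟩
  · have hcard := gameVal_le_card true E
    rw [potential, hQ, card_empty]
    lia
  by_cases hpartial : ∃ e ∈ E, (degTwo E ∩ e).Nonempty ∧ #(degTwo E ∩ e) ≤ 2
  · obtain ⟨e, he, ⟨w, hw⟩, hle⟩ := hpartial
    have := hplay he hw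
    lia
  · have hcard_le {e : Finset V} (he : e ∈ E) : #(degTwo E ∩ e) ≤ 3 :=
      (card_le_card inter_subset_right).trans (hE e he)
    have hdvd : 3 ∣ potential E := by
      refine three_dvd_potential fun e he => ?_
      rcases (degTwo E ∩ e).eq_empty_or_nonempty with hempty | hne
      · simp only [hempty, card_empty, dvd_zero]
      · have hgt : 2 < #(degTwo E ∩ e) := not_le.mp fun hle => hpartial ⟨e, he, hne, hle⟩
        exact (le_antisymm (hcard_le he) hgt).symm.dvd
    obtain ⟨e, he, hve⟩ : ∃ e ∈ E, v ∈ e :=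
      degree_pos_iff.mp (mem_degTwo.mp hv ▸ Nat.two_pos)
    have hbound := hplay he (mem_inter.mpr ⟨hv, hve⟩)
    have := hcard_le he
    -- The bound reads `6 τ ≤ Φ + 1`, where `3` divides both `6 τ` and `Φ`.
    lia

theorem six_mul_gameVal_le_potential {E : Finset (Finset V)} (hE : ∀ e ∈ E, #e ≤ 3) :
    6 * (gameVal true E : ℤ) ≤ potential E ∧ 6 * (gameVal false E : ℤ) ≤ potential E + 2 := by
  induction E using Finset.strongInduction with
  | H E ih =>
    have ih_residual {v : V} (hv : v ∈ playable E) :=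
      ih _ (residual_ssubset hv) fun e he => hE e (mem_of_mem_filter e he)
    exact ⟨six_mul_gameVal_true_le_of_residual hE fun _ hv => (ih_residual hv).2,
      six_mul_gameVal_false_le_of_residual hE fun _ hv => (ih_residual hv).1⟩

end TransversalGame

/-- If `H` is a `3`-uniform hypergraph with maximum degree at most `2`,
then `τ_g(H) ≤ (3/10)(n(H) + m(H))`. -/
theorem gameTransversalNum_le_of_three_uniform_maxDegree_le_two
    {V : Type} [Fintype V] [DecidableEq V] (E : Finset (Finset V))
    (h3 : ∀ e ∈ E, e.card = 3)
    (hΔ : ∀ v : V, (E.filter (fun e => v ∈ e)).card ≤ 2) :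
    (gameTransversalNum E : ℚ) ≤ (3 / 10) * (Fintype.card V + E.card) := by
  have hgame : 6 * (gameTransversalNum E : ℤ) ≤ TransversalGame.potential E :=
    (TransversalGame.six_mul_gameVal_le_potential fun e he => (h3 e he).le).1
  have hlower := TransversalGame.card_degTwo_mul_two_le_sum_card E
  have hupper := TransversalGame.sum_card_le_card_add_card_degTwo hΔ
  have hsum : ∑ e ∈ E, e.card = E.card * 3 := Finset.sum_const_nat h3
  have hnat : 10 * gameTransversalNum E ≤ 3 * (Fintype.card V + E.card) := by
    unfold TransversalGame.potential at hgame
    lia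
  have hrat : 10 * (gameTransversalNum E : ℚ) ≤ 3 * (Fintype.card V + E.card) := by
    exact_mod_cast hnat
  linarith
end

section
/- Let H be a 4-uniform hypergraph and define the weight w(H) = 852·m(H) + Σ_{v ∈ V(H)} f(d_H(v)), where f depends on the maximum degree Δ(H) as follows: if Δ(H) ≥ 5 then f(d) = 852 for every d ≥ 1; if Δ(H) = 4 then f(4) = 852, f(3) = 845, f(2) = 838, f(1) = 831; if Δ(H) = 3 then f(3) = 845, f(2) = 750, f(1) = 655; if Δ(H) ≤ 2 then f(2) = 750, f(1) = 543; and in every case f(0) = 0. Then 3024 τ_g(H) ≤ w(H). -/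
variable {V : Type} [Fintype V] [DecidableEq V]

/-- The degree of a vertex `v`: the number of edges containing `v`. -/
def degree (E : Finset (Finset V)) (v : V) : ℕ := (E.filter (fun e => v ∈ e)).card

/-- The maximum degree `Δ(H)`. -/
def maxDegree (E : Finset (Finset V)) : ℕ := Finset.univ.sup (degree E)

/-- The weight `f(d)` of a vertex of degree `d`, depending on the maximum degree `Δ`:
if `Δ ≥ 5` then `f(d) = 852` for every `d ≥ 1`; if `Δ = 4` then `f(4) = 852`,
`f(3) = 845`, `f(2) = 838`, `f(1) = 831`; if `Δ = 3` then `f(3) = 845`, `f(2) = 750`,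
`f(1) = 655`; if `Δ ≤ 2` then `f(2) = 750`, `f(1) = 543`; and `f(0) = 0` always. -/
def vertexWeight (Δ d : ℕ) : ℕ :=
  if d = 0 then 0
  else if 5 ≤ Δ then 852
  else if Δ = 4 then (if d = 4 then 852 else if d = 3 then 845 else if d = 2 then 838 else 831)
  else if Δ = 3 then (if d = 3 then 845 else if d = 2 then 750 else 655)
  else if d = 2 then 750 else 543

/-!
Suppose first that some degree is at least three. On `{1, …, Δ}` the weight `f` is arithmetic, so
deleting the edges at `v` costs every other vertex at least the common difference per lost edge.
If Edge-hitter plays a vertex of maximum degree, his move and any reply of Staller together lower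
the weight by at least `6048 = 2 · 3024`.

If `Δ ≤ 2`, the weight is `3024 m - 336 n₂`, where `n₂` is the number of vertices of degree two, so
the claim is `9 τ_g + n₂ ≤ 9 m`. View the edges of `H` as the vertices of a multigraph whose edges
are the vertices of degree two in `H`: playing such a vertex deletes both of its ends. Edge-hitter
deletes two ends together with at most seven incident multigraph edges, and the only reply that can
hurt is the deletion of a single multigraph vertex of degree three. Then some remaining multigraph
vertex has degree strictly between `0` and `4`, and this irregularity is worth one unit in an
induction that proves the strict inequality for hypergraphs that have it.
-/

open Finset

section Hypergraph

variable {E F : Finset (Finset V)} {u v : V}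

/-- The hypergraph formed by the edges that remain to be hit once `v` has been played. -/
def residualEdges (E : Finset (Finset V)) (v : V) : Finset (Finset V) := E.filter (v ∉ ·)

lemma mem_playable : v ∈ playable E ↔ ∃ e ∈ E, v ∈ e := by
  simp [playable]

lemma mem_playable_iff_degree_pos : v ∈ playable E ↔ 0 < degree E v := by
  simp only [mem_playable, degree, card_pos, Finset.Nonempty, mem_filter]

section

omit [Fintype V]

lemma residualEdges_subset (E : Finset (Finset V)) (v : V) : residualEdges E v ⊆ E :=
  filter_subset _ _

lemma degree_mono (h : E ⊆ F) (v : V) : degree E v ≤ degree F v :=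
  card_le_card (filter_subset_filter _ h)

lemma card_residualEdges_add_degree (E : Finset (Finset V)) (v : V) :
    #(residualEdges E v) + degree E v = #E := by
  rw [add_comm]
  exact card_filter_add_card_filter_not (v ∈ ·)

lemma degree_residualEdges_add (E : Finset (Finset V)) (v u : V) :
    degree (residualEdges E v) u + degree (E.filter (v ∈ ·)) u = degree E u := by
  rw [degree, degree, residualEdges, filter_comm, filter_comm (v ∈ ·), add_comm]
  exact card_filter_add_card_filter_not (v ∈ ·)

lemma degree_residualEdges_self (E : Finset (Finset V)) (v : V) :
    degree (residualEdges E v) v = 0 := by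
  simp [degree, residualEdges, filter_filter]

end

lemma residualEdges_ssubset (hv : v ∈ playable E) : residualEdges E v ⊂ E := by
  obtain ⟨e, he, hve⟩ := mem_playable.1 hv
  exact filter_ssubset.2 ⟨e, he, not_not.2 hve⟩

lemma degree_le_maxDegree (E : Finset (Finset V)) (v : V) : degree E v ≤ maxDegree E :=
  le_sup (f := degree E) (mem_univ v)

lemma maxDegree_mono (h : E ⊆ F) : maxDegree E ≤ maxDegree F :=
  sup_mono_fun fun v _ => degree_mono h v

lemma exists_degree_eq_maxDegree (h : 0 < maxDegree E) : ∃ v, degree E v = maxDegree E := by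
  obtain ⟨v, hv, -⟩ := Finset.lt_sup_iff.1 h
  obtain ⟨w, -, hw⟩ := exists_mem_eq_sup univ ⟨v, hv⟩ (degree E)
  exact ⟨w, hw.symm⟩

lemma sum_degree (E : Finset (Finset V)) : ∑ v, degree E v = ∑ e ∈ E, #e := by
  simpa [degree, bipartiteAbove, bipartiteBelow] using
    sum_card_bipartiteAbove_eq_sum_card_bipartiteBelow (s := univ) (t := E) (fun v e => v ∈ e)

lemma sum_degree_of_uniform {k : ℕ} (hk : ∀ e ∈ E, #e = k) : ∑ v, degree E v = k * #E := by
  rw [sum_degree, sum_congr rfl hk, sum_const, smul_eq_mul, mul_comm]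

end Hypergraph

section Game

variable {E : Finset (Finset V)} {v : V}

lemma gameVal_eq_zero (b : Bool) (h : ¬ (playable E).Nonempty) : gameVal b E = 0 := by
  rw [gameVal, dif_neg h]

lemma gameVal_true_le (hv : v ∈ playable E) :
    gameVal true E ≤ 1 + gameVal false (residualEdges E v) := by
  rw [gameVal, dif_pos ⟨v, hv⟩, if_pos rfl]
  exact Nat.add_le_add_left (inf'_le _ (mem_attach _ ⟨v, hv⟩)) 1

lemma gameVal_false_eq_zero_or_exists_reply (E : Finset (Finset V)) :
    gameVal false E = 0 ∨
      ∃ v ∈ playable E, gameVal false E = 1 + gameVal true (residualEdges E v) := by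
  by_cases h : (playable E).Nonempty
  · obtain ⟨w, -, hw⟩ := exists_mem_eq_sup' (attach_nonempty_iff.2 h)
      fun w => gameVal true (residualEdges E w.1)
    refine .inr ⟨w.1, w.2, ?_⟩
    rw [gameVal, dif_pos h, if_neg Bool.false_ne_true, ← hw]
    rfl
  · exact .inl (gameVal_eq_zero _ h)

lemma gameVal_true_le_one_or_round (hv : v ∈ playable E) :
    gameVal true E ≤ 1 ∨ ∃ u ∈ playable (residualEdges E v),
      gameVal true E ≤ 2 + gameVal true (residualEdges (residualEdges E v) u) := by
  have hmove := gameVal_true_le hv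
  rcases gameVal_false_eq_zero_or_exists_reply (residualEdges E v) with hend | ⟨u, hu, hreply⟩
  · exact .inl (by omega)
  · exact .inr ⟨u, hu, by omega⟩

lemma gameVal_le_card (b : Bool) (E : Finset (Finset V)) : gameVal b E ≤ #E := by
  induction E using Finset.strongInduction generalizing b with
  | H E ih =>
    have bound {v : V} (hv : v ∈ playable E) (b : Bool) :
        1 + gameVal b (residualEdges E v) ≤ #E := by
      have := ih _ (residualEdges_ssubset hv) b
      have := card_lt_card (residualEdges_ssubset hv)
      omega
    cases b with
    | false =>
      rcases gameVal_false_eq_zero_or_exists_reply E with h | ⟨v, hv, h⟩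
      · exact h ▸ Nat.zero_le _
      · exact h ▸ bound hv true
    | true =>
      by_cases h : (playable E).Nonempty
      · exact (gameVal_true_le h.choose_spec).trans (bound h.choose_spec false)
      · exact gameVal_eq_zero true h ▸ Nat.zero_le _

end Game

section Weight

variable {E : Finset (Finset V)} {Δ : ℕ}

/-- The weight `w(H)` computed with the vertex weights belonging to `Δ`. Keeping `Δ` separate from
`maxDegree E` allows the weights to stay fixed while edges are deleted. -/
def weight (Δ : ℕ) (E : Finset (Finset V)) : ℕ := 852 * #E + ∑ v, vertexWeight Δ (degree E v)

/-- The common difference of `vertexWeight Δ` on `{1, …, Δ}`. -/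
def weightSlope (Δ : ℕ) : ℕ :=
  if 5 ≤ Δ then 0 else if Δ = 4 then 7 else if Δ = 3 then 95 else 207

/-- A lower bound for the loss of weight when a vertex of degree `d` is played in a `4`-uniform
hypergraph: `d` edges disappear, the vertex becomes isolated, and the other vertices lose a total
of `3 * d` in degree. -/
def moveGain (Δ d : ℕ) : ℕ := 852 * d + vertexWeight Δ d + weightSlope Δ * (3 * d)

lemma vertexWeight_zero (Δ : ℕ) : vertexWeight Δ 0 = 0 := if_pos rfl

lemma vertexWeight_mono_left {Δ' d : ℕ} (hd : d ≤ Δ) (hΔ : Δ ≤ Δ') :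
    vertexWeight Δ d ≤ vertexWeight Δ' d := by
  unfold vertexWeight
  split_ifs <;> omega

lemma vertexWeight_add_weightSlope_mul_le {a t : ℕ} (h : a + t ≤ Δ) :
    vertexWeight Δ a + weightSlope Δ * t ≤ vertexWeight Δ (a + t) := by
  unfold vertexWeight weightSlope
  split_ifs <;> omega

lemma moveGain_mono {a b : ℕ} (hab : a ≤ b) (hb : b ≤ Δ) : moveGain Δ a ≤ moveGain Δ b := by
  obtain ⟨t, rfl⟩ := Nat.exists_eq_add_of_le hab
  have hweight := vertexWeight_add_weightSlope_mul_le hb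
  unfold moveGain
  gcongr
  exact (Nat.le_add_right _ _).trans hweight

lemma le_moveGain_self_add_moveGain_one (hΔ : 3 ≤ Δ) : 6048 ≤ moveGain Δ Δ + moveGain Δ 1 := by
  obtain rfl | rfl | h5 : Δ = 3 ∨ Δ = 4 ∨ 5 ≤ Δ := by omega
  · decide
  · decide
  · simp only [moveGain, vertexWeight, weightSlope, if_pos h5, if_neg (show Δ ≠ 0 by omega),
      if_neg one_ne_zero]
    omega

lemma weight_maxDegree_le (h : maxDegree E ≤ Δ) : weight (maxDegree E) E ≤ weight Δ E :=
  Nat.add_le_add_left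
    (sum_le_sum fun v _ => vertexWeight_mono_left (degree_le_maxDegree E v) h) _

lemma sum_degree_residualEdges_add_le {g : ℕ → ℕ} {c k : ℕ} (hk : ∀ e ∈ E, #e = k + 1)
    (hg : ∀ a t, a + t ≤ maxDegree E → g a + c * t ≤ g (a + t)) (v : V) :
    ∑ u, g (degree (residualEdges E v) u) + (g (degree E v) + c * (k * degree E v)) ≤
      ∑ u, g (degree E u) + g 0 := by
  set star := E.filter (v ∈ ·)
  have hstar : ∑ u ∈ univ.erase v, degree star u = k * degree E v := by
    have htotal : ∑ u, degree star u = (k + 1) * degree E v :=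
      sum_degree_of_uniform fun e he => hk e (mem_of_mem_filter e he)
    have hself : degree star v = degree E v := by
      simpa [degree_residualEdges_self] using degree_residualEdges_add E v v
    rw [← add_sum_erase _ _ (mem_univ v), hself] at htotal
    linarith
  have hothers : ∑ u ∈ univ.erase v, g (degree (residualEdges E v) u) + c * (k * degree E v) ≤
      ∑ u ∈ univ.erase v, g (degree E u) := by
    rw [← hstar, mul_sum, ← sum_add_distrib]
    refine sum_le_sum fun u _ => ?_
    have hu := degree_residualEdges_add E v u
    exact hu ▸ hg _ _ (hu.le.trans (degree_le_maxDegree E u))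
  rw [← add_sum_erase univ _ (mem_univ v),
    ← add_sum_erase univ (fun u => g (degree E u)) (mem_univ v), degree_residualEdges_self]
  omega

lemma weight_residualEdges_add_moveGain_le (h4 : ∀ e ∈ E, #e = 4) (hΔ : maxDegree E ≤ Δ) (v : V) :
    weight Δ (residualEdges E v) + moveGain Δ (degree E v) ≤ weight Δ E := by
  have hsum := sum_degree_residualEdges_add_le (k := 3) h4
    (fun a t h => vertexWeight_add_weightSlope_mul_le (h.trans hΔ)) v
  have hcard := card_residualEdges_add_degree E v
  rw [vertexWeight_zero] at hsum
  unfold weight moveGain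
  omega

lemma gameVal_le_weight_of_three_le_maxDegree (h4 : ∀ e ∈ E, #e = 4) (h3 : 3 ≤ maxDegree E)
    (ih : ∀ F ⊂ E, 3024 * gameVal true F ≤ weight (maxDegree F) F) :
    3024 * gameVal true E ≤ weight (maxDegree E) E := by
  obtain ⟨v, hv⟩ := exists_degree_eq_maxDegree (E := E) (by omega)
  have hplay : v ∈ playable E := mem_playable_iff_degree_pos.2 (by omega)
  have hsub := residualEdges_subset E v
  have hround := le_moveGain_self_add_moveGain_one h3
  have hmove := weight_residualEdges_add_moveGain_le h4 le_rfl v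
  rw [hv] at hmove
  rcases gameVal_true_le_one_or_round hplay with hend | ⟨u, hu, hgame⟩
  · have := moveGain_mono (a := 1) (by omega) (le_refl (maxDegree E))
    omega
  · have hsub' := residualEdges_subset (residualEdges E v) u
    have hreply := weight_residualEdges_add_moveGain_le (fun e he => h4 e (hsub he))
      (maxDegree_mono hsub) u
    have hgain := moveGain_mono (a := 1) (mem_playable_iff_degree_pos.1 hu)
      ((degree_mono hsub u).trans (degree_le_maxDegree E u))
    have hrest := (ih _ (hsub'.trans_ssubset (residualEdges_ssubset hplay))).trans
      (weight_maxDegree_le (maxDegree_mono (hsub'.trans hsub)))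
    omega

end Weight

section MaxDegreeTwo

variable {E F : Finset (Finset V)} {e f g h : Finset V} {v : V}

/-- The vertices lying in at least two edges. For maximum degree two they are the edges of the
multigraph whose vertices are the edges of the hypergraph: `#(sharedVertices E ∩ e)` is the degree
of `e` in it, and `#(e ∩ f)` is the multiplicity of the pair `e`, `f`. -/
def sharedVertices (E : Finset (Finset V)) : Finset V := univ.filter (1 < degree E ·)

/-- Some edge contains both a shared vertex and a vertex that is not shared. -/
def HasMixedEdge (E : Finset (Finset V)) : Prop :=
  ∃ e ∈ E, ∃ x ∈ e, ∃ y ∈ e, x ∈ sharedVertices E ∧ y ∉ sharedVertices E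

/-- The bound `9 τ_g + n₂ ≤ 9 m` for maximum degree two, strict in the presence of a mixed edge. -/
def SharedVertexBound (E : Finset (Finset V)) : Prop :=
  9 * gameVal true E + #(sharedVertices E) ≤ 9 * #E ∧
    (HasMixedEdge E → 9 * gameVal true E + #(sharedVertices E) + 1 ≤ 9 * #E)

lemma mem_sharedVertices :
    v ∈ sharedVertices E ↔ ∃ e ∈ E, ∃ f ∈ E, v ∈ e ∧ v ∈ f ∧ e ≠ f := by
  simp only [sharedVertices, degree, one_lt_card, mem_filter, mem_univ]
  grind

lemma exists_ne_edge_of_mem_sharedVertices (hv : v ∈ sharedVertices E) (e : Finset V) :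
    ∃ f ∈ E, f ≠ e ∧ v ∈ f := by
  obtain ⟨a, ha, b, hb, hva, hvb, hab⟩ := mem_sharedVertices.1 hv
  by_cases hae : a = e
  · exact ⟨b, hb, hae ▸ hab.symm, hvb⟩
  · exact ⟨a, ha, hae, hva⟩

lemma inter_subset_sharedVertices (he : e ∈ E) (hf : f ∈ E) (hef : e ≠ f) :
    e ∩ f ⊆ sharedVertices E := fun _ hx =>
  mem_sharedVertices.2 ⟨e, he, f, hf, mem_of_mem_inter_left hx, mem_of_mem_inter_right hx, hef⟩

lemma card_sharedVertices_inter_union (he : e ∈ E) (hf : f ∈ E) (hef : e ≠ f) :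
    #(sharedVertices E ∩ (e ∪ f)) + #(e ∩ f) =
      #(sharedVertices E ∩ e) + #(sharedVertices E ∩ f) := by
  rw [inter_union_distrib_left, ← card_union_add_card_inter (_ ∩ e), ← inter_inter_distrib_left,
    inter_eq_right.2 (inter_subset_sharedVertices he hf hef)]

lemma eq_or_eq_of_maxDegree_le_two (h2 : maxDegree E ≤ 2) (he : e ∈ E) (hf : f ∈ E) (hef : e ≠ f)
    (hve : v ∈ e) (hvf : v ∈ f) (hg : g ∈ E) (hvg : v ∈ g) : g = e ∨ g = f := by
  by_contra! hne
  have hdeg : 2 < degree E v := two_lt_card.2 ⟨e, mem_filter.2 ⟨he, hve⟩, f,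
    mem_filter.2 ⟨hf, hvf⟩, g, mem_filter.2 ⟨hg, hvg⟩, hef, hne.1.symm, hne.2.symm⟩
  have := degree_le_maxDegree E v
  omega

lemma residualEdges_eq_sdiff_pair (h2 : maxDegree E ≤ 2) (he : e ∈ E) (hf : f ∈ E) (hef : e ≠ f)
    (hve : v ∈ e) (hvf : v ∈ f) : residualEdges E v = E \ {e, f} := by
  ext g
  simp only [residualEdges, mem_filter, mem_sdiff, mem_insert, mem_singleton]
  refine and_congr_right fun hg => not_congr ⟨?_, ?_⟩
  · exact eq_or_eq_of_maxDegree_le_two h2 he hf hef hve hvf hg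
  · rintro (rfl | rfl) <;> assumption

lemma residualEdges_eq_sdiff_singleton (he : e ∈ E) (hve : v ∈ e) (hv : v ∉ sharedVertices E) :
    residualEdges E v = E \ {e} := by
  ext g
  simp only [residualEdges, mem_filter, mem_sdiff, mem_singleton]
  refine and_congr_right fun hg => not_congr ⟨fun hvg => ?_, fun hge => hge ▸ hve⟩
  by_contra hge
  exact hv (mem_sharedVertices.2 ⟨g, hg, e, he, hvg, hve, hge⟩)

lemma sharedVertices_sdiff (h2 : maxDegree E ≤ 2) (hF : F ⊆ E) :
    sharedVertices (E \ F) = sharedVertices E \ F.biUnion id := by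
  ext v
  simp only [mem_sharedVertices, mem_sdiff, mem_biUnion, id, not_exists, not_and]
  constructor
  · rintro ⟨e, ⟨he, heF⟩, f, ⟨hf, hfF⟩, hve, hvf, hef⟩
    refine ⟨⟨e, he, f, hf, hve, hvf, hef⟩, fun g hg hvg => ?_⟩
    rcases eq_or_eq_of_maxDegree_le_two h2 he hf hef hve hvf (hF hg) hvg with rfl | rfl
    · exact heF hg
    · exact hfF hg
  · rintro ⟨⟨e, he, f, hf, hve, hvf, hef⟩, hv⟩
    exact ⟨e, ⟨he, fun h => hv e h hve⟩, f, ⟨hf, fun h => hv f h hvf⟩, hve, hvf, hef⟩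

lemma sharedVertices_sdiff_pair (h2 : maxDegree E ≤ 2) (he : e ∈ E) (hf : f ∈ E) :
    sharedVertices (E \ {e, f}) = sharedVertices E \ (e ∪ f) := by
  rw [sharedVertices_sdiff h2 (insert_subset he (singleton_subset_iff.2 hf)), biUnion_insert,
    singleton_biUnion, id, id]

lemma card_sharedVertices_sdiff_pair (h2 : maxDegree E ≤ 2) (he : e ∈ E) (hf : f ∈ E)
    (hef : e ≠ f) :
    #(sharedVertices (E \ {e, f})) + (#(sharedVertices E ∩ e) + #(sharedVertices E ∩ f)) =
      #(sharedVertices E) + #(e ∩ f) := by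
  rw [sharedVertices_sdiff_pair h2 he hf, ← card_sharedVertices_inter_union he hf hef,
    ← add_assoc, card_sdiff_add_card_inter]

lemma card_sharedVertices_sdiff_singleton (h2 : maxDegree E ≤ 2) (he : e ∈ E) :
    #(sharedVertices (E \ {e})) + #(sharedVertices E ∩ e) = #(sharedVertices E) := by
  rw [sharedVertices_sdiff h2 (singleton_subset_iff.2 he), singleton_biUnion, id,
    card_sdiff_add_card_inter]

lemma sum_card_inter_le_card_sharedVertices_inter (h2 : maxDegree E ≤ 2) (he : e ∈ E)
    (hF : F ⊆ E) (heF : e ∉ F) : ∑ f ∈ F, #(e ∩ f) ≤ #(sharedVertices E ∩ e) := by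
  have hne {f : Finset V} (hf : f ∈ F) : e ≠ f := fun h => heF (h ▸ hf)
  rw [← card_biUnion]
  · refine card_le_card (biUnion_subset.2 fun f hf => subset_inter ?_ inter_subset_left)
    exact inter_subset_sharedVertices he (hF hf) (hne hf)
  · refine fun f hf g hg hfg => disjoint_left.2 fun x hxf hxg => ?_
    rw [mem_inter] at hxf hxg
    rcases eq_or_eq_of_maxDegree_le_two h2 he (hF hf) (hne hf) hxf.1 hxf.2 (hF hg) hxg.2
      with h | h
    · exact hne hg h.symm
    · exact hfg h.symm

lemma sharedVertices_inter_subset_of_not_hasMixedEdge (h2 : maxDegree E ≤ 2) (hF : F ⊆ E)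
    (hmix : ¬ HasMixedEdge (E \ F)) (hh : h ∈ E \ F) (hg : g ∈ F) (hgh : (h ∩ g).Nonempty) :
    sharedVertices E ∩ h ⊆ F.biUnion id := by
  intro x hx
  by_contra hxF
  obtain ⟨y, hy⟩ := hgh
  rw [mem_inter] at hx hy
  refine hmix ⟨h, hh, x, hx.2, y, hy.1, ?_, ?_⟩ <;> rw [sharedVertices_sdiff h2 hF, mem_sdiff]
  · exact ⟨hx.1, hxF⟩
  · exact fun hyF => hyF.2 (mem_biUnion.2 ⟨g, hg, hy.2⟩)

lemma subset_sharedVertices_of_not_hasMixedEdge (hmix : ¬ HasMixedEdge E) (he : e ∈ E)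
    (hve : v ∈ e) (hv : v ∈ sharedVertices E) : e ⊆ sharedVertices E := fun y hy => by
  by_contra hyS
  exact hmix ⟨e, he, v, hve, y, hy, hv, hyS⟩

lemma card_sharedVertices_inter_le_four (h4 : ∀ e ∈ E, #e = 4) (he : e ∈ E) :
    #(sharedVertices E ∩ e) ≤ 4 :=
  (card_le_card inter_subset_right).trans (h4 e he).le

lemma card_sharedVertices_inter_le_three (h4 : ∀ e ∈ E, #e = 4) (he : e ∈ E) (hve : v ∈ e)
    (hv : v ∉ sharedVertices E) : #(sharedVertices E ∩ e) ≤ 3 := by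
  have hlt : #(sharedVertices E ∩ e) < #e := card_lt_card <|
    inter_subset_right.ssubset_of_not_subset fun h => hv (mem_of_mem_inter_left (h hve))
  have := h4 e he
  omega

lemma exists_adjacent_of_not_hasMixedEdge_sdiff (h2 : maxDegree E ≤ 2) (he : e ∈ E) (hf : f ∈ E)
    (hg : g ∈ E) (hmix : ¬ HasMixedEdge (E \ {e, f, g}))
    (hv : v ∈ (sharedVertices E ∩ g) \ (e ∪ f)) :
    ∃ h ∈ E \ {e, f, g}, v ∈ h ∧ #(sharedVertices E ∩ h) ≤ #(e ∩ h) + #(f ∩ h) + #(g ∩ h) := by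
  simp only [mem_sdiff, mem_inter, mem_union, not_or] at hv
  obtain ⟨⟨hvS, hvg⟩, hve, hvf⟩ := hv
  obtain ⟨h, hh, hhg, hvh⟩ := exists_ne_edge_of_mem_sharedVertices hvS g
  have hhE : h ∈ E \ {e, f, g} := by grind
  refine ⟨h, hhE, hvh, ?_⟩
  have hsub : sharedVertices E ∩ h ⊆ e ∩ h ∪ f ∩ h ∪ g ∩ h := by
    have := sharedVertices_inter_subset_of_not_hasMixedEdge h2 (by grind) hmix hhE (g := g)
      (by simp) ⟨v, mem_inter.2 ⟨hvh, hvg⟩⟩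
    simp only [biUnion_insert, singleton_biUnion, id] at this
    grind
  calc #(sharedVertices E ∩ h) ≤ #(e ∩ h ∪ f ∩ h ∪ g ∩ h) := card_le_card hsub
    _ ≤ #(e ∩ h ∪ f ∩ h) + #(g ∩ h) := card_union_le _ _
    _ ≤ #(e ∩ h) + #(f ∩ h) + #(g ∩ h) := Nat.add_le_add_right (card_union_le _ _) _

lemma hasMixedEdge_sdiff_of_card_inter_le_one (h4 : ∀ e ∈ E, #e = 4) (h2 : maxDegree E ≤ 2)
    (hmix : ¬ HasMixedEdge E) (hlin : ∀ a ∈ E, ∀ b ∈ E, a ≠ b → #(a ∩ b) ≤ 1) (he : e ∈ E)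
    (hf : f ∈ E) (hg : g ∈ E) (hv : v ∈ (sharedVertices E ∩ g) \ (e ∪ f)) :
    HasMixedEdge (E \ {e, f, g}) := by
  by_contra hmix'
  obtain ⟨h, hh, hvh, hle⟩ := exists_adjacent_of_not_hasMixedEdge_sdiff h2 he hf hg hmix' hv
  simp only [mem_sdiff, mem_insert, mem_singleton, not_or] at hh
  have hvS : v ∈ sharedVertices E := (mem_inter.1 (mem_sdiff.1 hv).1).1
  rw [inter_eq_right.2 (subset_sharedVertices_of_not_hasMixedEdge hmix hh.1 hvh hvS), h4 h hh.1]
    at hle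
  have := hlin e he h hh.1 (Ne.symm hh.2.1)
  have := hlin f hf h hh.1 (Ne.symm hh.2.2.1)
  have := hlin g hg h hh.1 (Ne.symm hh.2.2.2)
  omega

/-- Every two intersecting edges `e`, `f` contain at least six shared vertices in total: playing a
vertex of `e ∩ f` destroys that many. -/
def PairsExpensive (E : Finset (Finset V)) : Prop :=
  ∀ e ∈ E, ∀ f ∈ E, e ≠ f → 0 < #(e ∩ f) →
    #(e ∩ f) + 6 ≤ #(sharedVertices E ∩ e) + #(sharedVertices E ∩ f)

lemma PairsExpensive.card_eq_four_of_adjacent (hE : PairsExpensive E) (h4 : ∀ e ∈ E, #e = 4)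
    (he : e ∈ E) (hf : f ∈ E) (hg : g ∈ E) (he3 : #(sharedVertices E ∩ e) ≤ 3)
    (hh : h ∈ E \ {e, f, g}) (hgh : 0 < #(g ∩ h))
    (hle : #(sharedVertices E ∩ h) ≤ #(e ∩ h) + #(f ∩ h) + #(g ∩ h)) :
    #(sharedVertices E ∩ h) = 4 ∧ #(g ∩ h) ≤ 2 := by
  simp only [mem_sdiff, mem_insert, mem_singleton, not_or] at hh
  have := hE e he h hh.1 (Ne.symm hh.2.1)
  have := hE f hf h hh.1 (Ne.symm hh.2.2.1)
  have := hE g hg h hh.1 (Ne.symm hh.2.2.2)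
  have := card_sharedVertices_inter_le_four h4 hf
  have := card_sharedVertices_inter_le_four h4 hg
  have := card_sharedVertices_inter_le_four h4 hh.1
  omega

lemma sum_four_card_inter_le {a b c d : Finset V} (h2 : maxDegree E ≤ 2) (he : e ∈ E)
    (hE : {a, b, c, d} ⊆ E) (hnodup : [e, a, b, c, d].Nodup) :
    #(e ∩ a) + #(e ∩ b) + #(e ∩ c) + #(e ∩ d) ≤ #(sharedVertices E ∩ e) := by
  have := sum_card_inter_le_card_sharedVertices_inter h2 he hE (by grind)
  rw [sum_insert (by grind), sum_insert (by grind), sum_insert (by grind), sum_singleton] at this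
  omega

lemma card_sharedVertices_inter_le_sdiff_add (E : Finset (Finset V)) (e f g : Finset V) :
    #(sharedVertices E ∩ g) ≤
      #((sharedVertices E ∩ g) \ (e ∪ f)) + (#(g ∩ e) + #(g ∩ f)) := by
  rw [← card_sdiff_add_card_inter (sharedVertices E ∩ g) (e ∪ f)]
  refine Nat.add_le_add_left ((card_le_card ?_).trans (card_union_le _ _)) _
  rw [← inter_union_distrib_left]
  exact inter_subset_inter_right inter_subset_right

lemma PairsExpensive.hasMixedEdge_sdiff (hE : PairsExpensive E) (h4 : ∀ e ∈ E, #e = 4)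
    (h2 : maxDegree E ≤ 2) (he : e ∈ E) (hf : f ∈ E) (hg : g ∈ E) (hef : e ≠ f) (hge : g ≠ e)
    (hgf : g ≠ f) (hmeet : 0 < #(e ∩ f)) (he3 : #(sharedVertices E ∩ e) ≤ 3)
    (hg3 : #((sharedVertices E ∩ g) \ (e ∪ f)) = 3) : HasMixedEdge (E \ {e, f, g}) := by
  by_contra hmix
  have adjacent {v : V} (hv : v ∈ (sharedVertices E ∩ g) \ (e ∪ f)) : ∃ h ∈ E \ {e, f, g},
      v ∈ h ∧ 0 < #(g ∩ h) ∧ #(g ∩ h) ≤ 2 ∧ 4 ≤ #(e ∩ h) + #(f ∩ h) + #(g ∩ h) ∧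
      #(g ∩ h) + 2 ≤ #(sharedVertices E ∩ g) := by
    obtain ⟨h, hh, hvh, hle⟩ := exists_adjacent_of_not_hasMixedEdge_sdiff h2 he hf hg hmix hv
    have hpos : 0 < #(g ∩ h) := card_pos.2 ⟨v, by grind⟩
    obtain ⟨hfour, htwo⟩ := hE.card_eq_four_of_adjacent h4 he hf hg he3 hh hpos hle
    have := hE g hg h (by grind) (by grind) hpos
    exact ⟨h, hh, hvh, hpos, htwo, by omega, by omega⟩
  obtain ⟨v, hv⟩ := card_pos.1 (hg3 ▸ three_pos)
  obtain ⟨h, hh, -, hpos, htwo, hout, hdeg⟩ := adjacent hv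
  obtain ⟨w, hw, hwh⟩ := exists_mem_notMem_of_card_lt_card (by omega :
    #(g ∩ h) < #((sharedVertices E ∩ g) \ (e ∪ f)))
  obtain ⟨k, hk, hwk, -, -, hout_k, hdeg_k⟩ := adjacent hw
  have hne : h ≠ k := by grind
  have sum_e := sum_four_card_inter_le (a := f) (b := g) (c := h) (d := k) h2 he (by grind)
    (by grind)
  have sum_f := sum_four_card_inter_le (a := e) (b := g) (c := h) (d := k) h2 hf (by grind)
    (by grind)
  have sum_g := sum_four_card_inter_le (a := e) (b := f) (c := h) (d := k) h2 hg (by grind)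
    (by grind)
  have hg_le := card_sharedVertices_inter_le_sdiff_add E e f g
  have := card_sharedVertices_inter_le_four h4 hf
  rw [inter_comm f e] at sum_f
  rw [inter_comm g e, inter_comm g f] at sum_g hg_le
  -- All multigraph edges at `h` and `k`, four each, would come from `e`, `f` and `g`, which have
  -- at most seven to spare in total.
  omega

lemma residualEdges_of_mem_playable (h4 : ∀ e ∈ E, #e = 4) (h2 : maxDegree E ≤ 2)
    (hv : v ∈ playable E) :
    (∃ g ∈ E, residualEdges E v = E \ {g} ∧ #(sharedVertices E ∩ g) ≤ 3) ∨
      #(residualEdges E v) + 2 = #E ∧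
        #(sharedVertices E) ≤ #(sharedVertices (residualEdges E v)) + 7 := by
  by_cases hvS : v ∈ sharedVertices E
  · obtain ⟨e, he, f, hf, hve, hvf, hef⟩ := mem_sharedVertices.1 hvS
    have hshared := card_sharedVertices_sdiff_pair h2 he hf hef
    have hmeet : 0 < #(e ∩ f) := card_pos.2 ⟨v, mem_inter.2 ⟨hve, hvf⟩⟩
    have := card_sharedVertices_inter_le_four h4 he
    have := card_sharedVertices_inter_le_four h4 hf
    have hcard := card_sdiff_add_card_eq_card (insert_subset he (singleton_subset_iff.2 hf))
    rw [card_pair hef] at hcard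
    rw [residualEdges_eq_sdiff_pair h2 he hf hef hve hvf]
    exact .inr ⟨hcard, by omega⟩
  · obtain ⟨g, hg, hvg⟩ := mem_playable.1 hv
    exact .inl ⟨g, hg, residualEdges_eq_sdiff_singleton hg hvg hvS,
      card_sharedVertices_inter_le_three h4 hg hvg hvS⟩

lemma gameVal_residualEdges_of_mem_playable_le (h4 : ∀ e ∈ E, #e = 4) (h2 : maxDegree E ≤ 2)
    (hv : v ∈ playable E) (hbound : SharedVertexBound (residualEdges E v)) :
    9 * gameVal true (residualEdges E v) + #(sharedVertices E) + 6 ≤ 9 * #E ∧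
      ((∀ g ∈ E, #(sharedVertices E ∩ g) = 3 → HasMixedEdge (E \ {g})) →
        9 * gameVal true (residualEdges E v) + #(sharedVertices E) + 7 ≤ 9 * #E) := by
  have hle := hbound.1
  rcases residualEdges_of_mem_playable h4 h2 hv with ⟨g, hg, hres, hg3⟩ | ⟨hcard, hshared⟩
  · have hlt := hbound.2
    rw [hres] at hle hlt ⊢
    have hshared := card_sharedVertices_sdiff_singleton h2 hg
    have hcard := card_sdiff_add_card_eq_card (singleton_subset_iff.2 hg)
    rw [card_singleton] at hcard
    refine ⟨by omega, fun hmix => ?_⟩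
    have := fun hthree => hlt (hmix g hg hthree)
    omega
  · omega

lemma gameVal_add_card_sharedVertices_le_of_pair {s : ℕ} (h4 : ∀ e ∈ E, #e = 4)
    (h2 : maxDegree E ≤ 2) (ih : ∀ F ⊂ E, SharedVertexBound F) (he : e ∈ E) (hf : f ∈ E)
    (hef : e ≠ f) (hmeet : 0 < #(e ∩ f))
    (hcost : #(sharedVertices E ∩ e) + #(sharedVertices E ∩ f) + s ≤ #(e ∩ f) + 7)
    (hmix : #(sharedVertices E ∩ e) + #(sharedVertices E ∩ f) + s = #(e ∩ f) + 7 →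
      ∀ g ∈ E \ {e, f}, #((sharedVertices E ∩ g) \ (e ∪ f)) = 3 → HasMixedEdge (E \ {e, f, g})) :
    9 * gameVal true E + #(sharedVertices E) + s ≤ 9 * #E := by
  obtain ⟨v, hv⟩ := card_pos.1 hmeet
  obtain ⟨hve, hvf⟩ := mem_inter.1 hv
  have hplay : v ∈ playable E := mem_playable.2 ⟨e, he, hve⟩
  have hsub := residualEdges_ssubset hplay
  have hround := gameVal_true_le_one_or_round hplay
  rw [residualEdges_eq_sdiff_pair h2 he hf hef hve hvf] at hsub hround
  have hshared := card_sharedVertices_sdiff_pair h2 he hf hef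
  have hcard := card_sdiff_add_card_eq_card (insert_subset he (singleton_subset_iff.2 hf))
  rw [card_pair hef] at hcard
  rcases hround with hend | ⟨u, hu, hgame⟩
  · have := (ih _ hsub).1
    omega
  obtain ⟨hle, hlt⟩ := gameVal_residualEdges_of_mem_playable_le (fun a ha => h4 a (hsub.subset ha))
    ((maxDegree_mono hsub.subset).trans h2) hu (ih _ ((residualEdges_ssubset hu).trans hsub))
  have hmix' : #(sharedVertices E ∩ e) + #(sharedVertices E ∩ f) + s = #(e ∩ f) + 7 →
      ∀ g ∈ E \ {e, f}, #(sharedVertices (E \ {e, f}) ∩ g) = 3 →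
        HasMixedEdge ((E \ {e, f}) \ {g}) := by
    simpa only [sharedVertices_sdiff_pair h2 he hf, ← inf_eq_inter, sdiff_inf_right_comm,
      sdiff_sdiff_left, sup_eq_union, insert_union, singleton_union] using hmix
  have := fun hseven => hlt (hmix' hseven)
  omega

lemma gameVal_add_card_sharedVertices_lt_of_hasMixedEdge (h4 : ∀ e ∈ E, #e = 4)
    (h2 : maxDegree E ≤ 2) (ih : ∀ F ⊂ E, SharedVertexBound F) (hmix : HasMixedEdge E) :
    9 * gameVal true E + #(sharedVertices E) + 1 ≤ 9 * #E := by
  by_cases hE : PairsExpensive E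
  · obtain ⟨e, he, v, hve, w, hwe, hv, hw⟩ := hmix
    obtain ⟨f, hf, hfe, hvf⟩ := exists_ne_edge_of_mem_sharedVertices hv e
    have hmeet : 0 < #(e ∩ f) := card_pos.2 ⟨v, mem_inter.2 ⟨hve, hvf⟩⟩
    have he3 := card_sharedVertices_inter_le_three h4 he hwe hw
    have := card_sharedVertices_inter_le_four h4 hf
    refine gameVal_add_card_sharedVertices_le_of_pair h4 h2 ih he hf hfe.symm hmeet
      (by omega) fun _ g hg => ?_
    simp only [mem_sdiff, mem_insert, mem_singleton, not_or] at hg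
    exact hE.hasMixedEdge_sdiff h4 h2 he hf hg.1 hfe.symm hg.2.1 hg.2.2 hmeet he3
  · unfold PairsExpensive at hE
    push Not at hE
    obtain ⟨e, he, f, hf, hef, hmeet, hcheap⟩ := hE
    exact gameVal_add_card_sharedVertices_le_of_pair h4 h2 ih he hf hef hmeet (by omega)
      (by omega)

lemma gameVal_add_card_sharedVertices_le_of_not_hasMixedEdge (h4 : ∀ e ∈ E, #e = 4)
    (h2 : maxDegree E ≤ 2) (ih : ∀ F ⊂ E, SharedVertexBound F) (hmix : ¬ HasMixedEdge E) :
    9 * gameVal true E + #(sharedVertices E) ≤ 9 * #E := by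
  rcases (sharedVertices E).eq_empty_or_nonempty with hempty | ⟨v, hv⟩
  · rw [hempty, card_empty, add_zero]
    exact Nat.mul_le_mul_left 9 (gameVal_le_card true E)
  by_cases hlin : ∀ a ∈ E, ∀ b ∈ E, a ≠ b → #(a ∩ b) ≤ 1
  · obtain ⟨e, he, f, hf, hve, hvf, hef⟩ := mem_sharedVertices.1 hv
    have hmeet : 0 < #(e ∩ f) := card_pos.2 ⟨v, mem_inter.2 ⟨hve, hvf⟩⟩
    have := card_sharedVertices_inter_le_four h4 he
    have := card_sharedVertices_inter_le_four h4 hf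
    refine gameVal_add_card_sharedVertices_le_of_pair (s := 0) h4 h2 ih he hf hef hmeet
      (by omega) fun _ g hg hg3 => ?_
    obtain ⟨u, hu⟩ := card_pos.1 (hg3 ▸ three_pos)
    exact hasMixedEdge_sdiff_of_card_inter_le_one h4 h2 hmix hlin he hf (mem_sdiff.1 hg).1 hu
  · push Not at hlin
    obtain ⟨e, he, f, hf, hef, hmult⟩ := hlin
    have := card_sharedVertices_inter_le_four h4 he
    have := card_sharedVertices_inter_le_four h4 hf
    exact gameVal_add_card_sharedVertices_le_of_pair (s := 0) h4 h2 ih he hf hef (by omega)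
      (by omega) (by omega)

lemma sharedVertexBound_of_maxDegree_le_two (h4 : ∀ e ∈ E, #e = 4) (h2 : maxDegree E ≤ 2) :
    SharedVertexBound E := by
  induction E using Finset.strongInduction with
  | H E ih =>
    have ih' (F : Finset (Finset V)) (hF : F ⊂ E) : SharedVertexBound F :=
      ih F hF (fun e he => h4 e (hF.subset he)) ((maxDegree_mono hF.subset).trans h2)
    have hstrict := gameVal_add_card_sharedVertices_lt_of_hasMixedEdge h4 h2 ih'
    refine ⟨?_, hstrict⟩
    by_cases hmix : HasMixedEdge E
    · exact (Nat.le_succ _).trans (hstrict hmix)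
    · exact gameVal_add_card_sharedVertices_le_of_not_hasMixedEdge h4 h2 ih' hmix

lemma weight_add_card_sharedVertices (h4 : ∀ e ∈ E, #e = 4) (h2 : maxDegree E ≤ 2) :
    weight (maxDegree E) E + 336 * #(sharedVertices E) = 3024 * #E := by
  have hsum : ∑ v, vertexWeight (maxDegree E) (degree E v) + 336 * #(sharedVertices E) =
      543 * (4 * #E) := by
    rw [← sum_degree_of_uniform h4, sharedVertices, card_filter, mul_sum, mul_sum,
      ← sum_add_distrib]
    refine sum_congr rfl fun v _ => ?_
    have := degree_le_maxDegree E v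
    unfold vertexWeight
    split_ifs <;> omega
  unfold weight
  omega

lemma gameVal_le_weight_of_maxDegree_le_two (h4 : ∀ e ∈ E, #e = 4) (h2 : maxDegree E ≤ 2) :
    3024 * gameVal true E ≤ weight (maxDegree E) E := by
  have hbound := (sharedVertexBound_of_maxDegree_le_two h4 h2).1
  have hweight := weight_add_card_sharedVertices h4 h2
  omega

end MaxDegreeTwo

/-- If `H` is a `4`-uniform hypergraph with weight
`w(H) = 852 m(H) + Σ_{v ∈ V(H)} f(d_H(v))`, then `3024 τ_g(H) ≤ w(H)`. -/
theorem gameTransversalNum_weight_bound_of_four_uniform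
    {V : Type} [Fintype V] [DecidableEq V] (E : Finset (Finset V))
    (h4 : ∀ e ∈ E, e.card = 4) :
    3024 * gameTransversalNum E ≤
      852 * E.card + ∑ v : V, vertexWeight (maxDegree E) (degree E v) := by
  change 3024 * gameVal true E ≤ weight (maxDegree E) E
  induction E using Finset.strongInduction with
  | H E ih =>
    have ih' (F : Finset (Finset V)) (hF : F ⊂ E) :
        3024 * gameVal true F ≤ weight (maxDegree F) F :=
      ih F hF fun e he => h4 e (hF.subset he)
    rcases le_or_gt (maxDegree E) 2 with h2 | h3
    · exact gameVal_le_weight_of_maxDegree_le_two h4 h2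
    · exact gameVal_le_weight_of_three_le_maxDegree h4 h3 ih'
end
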